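/- For every μ ∈ ℂ∖ℤ and every integer n ≥ 0, T_{μ,n} = (−1)^n · π Γ((2n+1−μ)/2) Γ((2n+2+μ)/2) / ( [Γ((1−μ)/2)]² [Γ((μ+2)/2)]² Γ((2n+2−μ)/2) Γ((2n+3+μ)/2) ). -/

import Mathlib

open Real MeasureTheory intervalIntegral

/-- Legendre function of the first kind of complex degree `ν`, defined on `(-1, 1]`
via the Mehler–Dirichlet integral. -/
noncomputable def legendreP (ν : ℂ) (x : ℝ) : ℂ :=
  if x = 1 then 1
  else ((2 / π : ℝ) : ℂ) *
    ∫ β in (0:ℝ)..(Real.arccos x),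
      Complex.cos ((2*ν + 1) * (β:ℂ) / 2) / ((Real.sqrt (2 * (Real.cos β - x)) : ℝ) : ℂ)

/-- The generalized Clebsch–Gordan integral `T μ ν = ∫_{-1}^1 P_μ(x) P_ν(x) P_ν(-x) dx`. -/
noncomputable def T (μ ν : ℂ) : ℂ :=
  ∫ x in (-1:ℝ)..1, legendreP μ x * legendreP ν x * legendreP ν (-x)

/-!
For `μ ∈ ℂ`, let `Λ p = ∫ x in -1..1, P_μ x * p x` for polynomials `p`, and let
`L p = D ((1 - X²) D p)` with `D = d/dX`. Interchanging integrals in the Mehler–Dirichlet formula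
expresses the moments `Λ ((X + 1)^k)` by the integrals of `cos ((2 μ + 1) θ) cos^(2 k + 1) θ` over
`[0, π / 2]`, whose reduction formula says exactly that `Λ (L p) = -μ (μ + 1) Λ p` whenever
`p (-1) = 0`. This replaces the differential equation of `P_μ`, together with a boundary analysis at
its singularity `-1`.

The Mehler–Dirichlet integrals satisfy the Bonnet recursion, so for natural `n` the function `P_n`
is the Legendre polynomial. The polynomial `p = P_{n+1}² - P_n²` vanishes at `-1`, and `L p` is
again a combination of `P_n²` and `P_{n+1}²`. Hence `Λ (P_n²)` satisfies a first-order recursion in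
`n`, which is solved by quotients of Gamma values; the initial value `Λ 1` is elementary, and is
matched by the duplication and reflection formulas. Finally `P_n (-x) = (-1)^n P_n x` turns `T μ n`
into `(-1)^n Λ (P_n²)`.
-/

section LegendrePolynomial

open Polynomial

lemma map_eq_zero_of_isRoot {R M : Type*} [CommRing R] [AddCommMonoid M] [Module R M]
    (φ : R[X] →ₗ[R] M) {a : R} (hφ : ∀ k : ℕ, φ ((X - C a) ^ (k + 1)) = 0)
    {p : R[X]} (hp : p.IsRoot a) : φ p = 0 := by
  rw [← sum_taylor_eq p a, Polynomial.sum, map_sum]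
  refine Finset.sum_eq_zero fun i _ ↦ ?_
  rw [← smul_eq_C_mul, map_smul]
  rcases i with - | k
  · rw [taylor_coeff_zero, hp.eq_zero, zero_smul]
  · rw [hφ, smul_zero]

/-- The Legendre differential operator `p ↦ D ((1 - X²) D p)`, of which the Legendre polynomial of
degree `n` is an eigenvector with eigenvalue `-n (n + 1)`. -/
noncomputable def legendreOperator (R : Type*) [CommRing R] : R[X] →ₗ[R] R[X] :=
  derivative ∘ₗ LinearMap.mulLeft R (1 - X ^ 2) ∘ₗ derivative

section CommRing

variable {R : Type*} [CommRing R]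

lemma legendreOperator_apply (p : R[X]) :
    legendreOperator R p = derivative ((1 - X ^ 2) * derivative p) := rfl

lemma legendreOperator_X_add_one_pow (k : ℕ) :
    legendreOperator R ((X + 1) ^ (k + 1)) =
      (2 * ((k : R) + 1) ^ 2) • (X + 1) ^ k - (((k : R) + 1) * (k + 2)) • (X + 1) ^ (k + 1) := by
  have factor : (1 - X ^ 2) * derivative ((X + 1 : R[X]) ^ (k + 1)) =
      ((k : R[X]) + 1) * (2 * (X + 1) ^ (k + 1) - (X + 1) ^ (k + 2)) := by
    simp only [derivative_pow_succ, derivative_X, derivative_one, map_add, map_natCast, map_one]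
    ring
  rw [legendreOperator_apply, factor]
  simp only [derivative_mul, derivative_sub, derivative_pow_succ, derivative_X, derivative_one,
    derivative_natCast, derivative_ofNat, smul_eq_C_mul, map_add, map_mul, map_pow, map_natCast,
    map_ofNat, map_one, Nat.cast_add, Nat.cast_one]
  ring

/-- Since `legendreOperator` is bidiagonal on the powers of `X + 1`, the eigenvalue equation dual to
it only has to be tested on consecutive moments of `φ`. -/
lemma map_legendreOperator_of_moments {M : Type*} [AddCommGroup M] [Module R M]
    (φ : R[X] →ₗ[R] M) (c : R)
    (hφ : ∀ k : ℕ, (2 * ((k : R) + 1) ^ 2) • φ ((X + 1) ^ k) =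
      (((k : R) + 1) * (k + 2) - c) • φ ((X + 1) ^ (k + 1)))
    {p : R[X]} (hp : p.IsRoot (-1)) : φ (legendreOperator R p) = -c • φ p := by
  have vanish : (φ ∘ₗ legendreOperator R + c • φ) p = 0 := by
    refine map_eq_zero_of_isRoot _ (fun k ↦ ?_) hp
    rw [map_neg, map_one, sub_neg_eq_add, LinearMap.add_apply, LinearMap.comp_apply,
      LinearMap.smul_apply, legendreOperator_X_add_one_pow, map_sub, map_smul, map_smul, hφ]
    module
  rw [neg_smul]
  exact eq_neg_of_add_eq_zero_left vanish

end CommRing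

/-- The Legendre polynomials, by the Bonnet recursion. -/
noncomputable def legendrePoly (K : Type*) [Field K] : ℕ → K[X]
  | 0 => 1
  | 1 => X
  | n + 2 => C ((n : K) + 2)⁻¹ *
      ((2 * (n : K[X]) + 3) * X * legendrePoly K (n + 1) - ((n : K[X]) + 1) * legendrePoly K n)

variable {K : Type*} [Field K] [CharZero K]

lemma legendrePoly_bonnet (n : ℕ) :
    ((n : K[X]) + 2) * legendrePoly K (n + 2) =
      (2 * (n : K[X]) + 3) * X * legendrePoly K (n + 1) -
        ((n : K[X]) + 1) * legendrePoly K n := by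
  have cancel : ((n : K[X]) + 2) * C ((n : K) + 2)⁻¹ = 1 := by
    have ne_zero : (n : K) + 2 ≠ 0 := mod_cast (n + 1).succ_ne_zero
    rw [show (n : K[X]) + 2 = C ((n : K) + 2) by simp only [map_add, map_natCast, map_ofNat],
      ← C_mul, mul_inv_cancel₀ ne_zero, C_1]
  rw [legendrePoly, ← mul_assoc, cancel, one_mul]

lemma eval_legendrePoly_bonnet (n : ℕ) (x : K) :
    ((n : K) + 2) * (legendrePoly K (n + 2)).eval x =
      (2 * n + 3) * x * (legendrePoly K (n + 1)).eval x - (n + 1) * (legendrePoly K n).eval x := by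
  simpa using congrArg (eval x) (legendrePoly_bonnet (K := K) n)

lemma eval_neg_legendrePoly (n : ℕ) (x : K) :
    (legendrePoly K n).eval (-x) = (-1) ^ n * (legendrePoly K n).eval x := by
  induction n using Nat.twoStepInduction with
  | zero => simp [legendrePoly]
  | one => simp [legendrePoly]
  | more n ih ih' =>
    have ne_zero : (n : K) + 2 ≠ 0 := mod_cast (n + 1).succ_ne_zero
    apply mul_left_cancel₀ ne_zero
    rw [eval_legendrePoly_bonnet, ih, ih']
    linear_combination -(-1) ^ n * eval_legendrePoly_bonnet n x

lemma eval_one_legendrePoly (n : ℕ) : (legendrePoly K n).eval 1 = 1 := by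
  induction n using Nat.twoStepInduction with
  | zero => simp [legendrePoly]
  | one => simp [legendrePoly]
  | more n ih ih' =>
    have ne_zero : (n : K) + 2 ≠ 0 := mod_cast (n + 1).succ_ne_zero
    apply mul_left_cancel₀ ne_zero
    rw [eval_legendrePoly_bonnet, ih, ih']
    ring

lemma eval_neg_one_legendrePoly (n : ℕ) : (legendrePoly K n).eval (-1) = (-1) ^ n := by
  rw [eval_neg_legendrePoly, eval_one_legendrePoly, mul_one]

lemma derivative_legendrePoly (n : ℕ) :
    (1 - X ^ 2) * derivative (legendrePoly K n) =
        ((n : K[X]) + 1) * (X * legendrePoly K n - legendrePoly K (n + 1)) ∧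
      (1 - X ^ 2) * derivative (legendrePoly K (n + 1)) =
        ((n : K[X]) + 1) * (legendrePoly K n - X * legendrePoly K (n + 1)) := by
  induction n with
  | zero =>
    simp only [legendrePoly, derivative_one, derivative_X, CharP.cast_eq_zero]
    constructor <;> ring
  | succ n ih =>
    obtain ⟨lower, upper⟩ := ih
    have bonnet := legendrePoly_bonnet (K := K) n
    have bonnet' := congrArg derivative bonnet
    simp only [derivative_mul, derivative_sub, derivative_add, derivative_X, derivative_natCast,
      derivative_ofNat, derivative_one] at bonnet'
    have ne_zero : (n : K[X]) + 2 ≠ 0 := mod_cast (n + 1).succ_ne_zero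
    push_cast
    constructor
    · linear_combination upper + bonnet
    · apply mul_left_cancel₀ ne_zero
      linear_combination (1 - X ^ 2) * bonnet' + (2 * (n : K[X]) + 3) * X * upper -
        ((n : K[X]) + 1) * lower + X * ((n : K[X]) + 2) * bonnet

lemma legendreOperator_sq_sub_sq (n : ℕ) :
    legendreOperator K (legendrePoly K (n + 1) ^ 2 - legendrePoly K n ^ 2) =
      ((2 * (n : K) + 1) * (2 * n + 2)) • legendrePoly K n ^ 2 -
        ((2 * (n : K) + 2) * (2 * n + 3)) • legendrePoly K (n + 1) ^ 2 := by
  obtain ⟨lower, upper⟩ := derivative_legendrePoly (K := K) n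
  have flux : (1 - X ^ 2) * derivative (legendrePoly K (n + 1) ^ 2 - legendrePoly K n ^ 2) =
      2 * ((n : K[X]) + 1) * (2 * legendrePoly K (n + 1) * legendrePoly K n -
        X * (legendrePoly K (n + 1) ^ 2 + legendrePoly K n ^ 2)) := by
    simp only [derivative_sub, derivative_sq, map_ofNat]
    linear_combination 2 * legendrePoly K (n + 1) * upper - 2 * legendrePoly K n * lower
  have ne_zero : (1 - X ^ 2 : K[X]) ≠ 0 := fun h ↦ by simpa using congrArg (eval 0) h
  rw [legendreOperator_apply, flux]
  apply mul_left_cancel₀ ne_zero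
  simp only [derivative_mul, derivative_sub, derivative_sq, derivative_X,
    derivative_natCast, derivative_ofNat, derivative_one, smul_eq_C_mul, map_add, map_mul,
    map_natCast, map_ofNat, map_one]
  linear_combination
    (2 * ((n : K[X]) + 1) * (2 * legendrePoly K n - 2 * X * legendrePoly K (n + 1))) * upper +
    (2 * ((n : K[X]) + 1) * (2 * legendrePoly K (n + 1) - 2 * X * legendrePoly K n)) * lower

end LegendrePolynomial

section AbelKernel

/-- The kernel `1 / √(2 (c - x))` of the Mehler–Dirichlet integral. By the conventions for `√` and
division it vanishes for `x ≥ c`, so that integrals up to `c` extend beyond `c`. -/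
noncomputable def abelKernel (c x : ℝ) : ℝ := 1 / √(2 * (c - x))

lemma abelKernel_nonneg (c x : ℝ) : 0 ≤ abelKernel c x :=
  one_div_nonneg.2 (sqrt_nonneg _)

lemma abelKernel_of_le {c x : ℝ} (h : c ≤ x) : abelKernel c x = 0 := by
  rw [abelKernel, sqrt_eq_zero_of_nonpos (by linarith), div_zero]

lemma mul_abelKernel (c x : ℝ) : 2 * (c - x) * abelKernel c x = √(2 * (c - x)) := by
  rw [abelKernel, mul_one_div, div_sqrt]

lemma measurable_abelKernel : Measurable fun z : ℝ × ℝ ↦ abelKernel z.1 z.2 := by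
  unfold abelKernel
  fun_prop

lemma hasDerivAt_sqrt_two_mul_sub {c x : ℝ} (h : x < c) :
    HasDerivAt (fun x ↦ √(2 * (c - x))) (-abelKernel c x) x := by
  have inner : HasDerivAt (fun x ↦ 2 * (c - x)) (-2) x :=
    (((hasDerivAt_id x).const_sub c).const_mul 2).congr_deriv (by norm_num)
  refine (inner.sqrt (by linarith)).congr_deriv ?_
  rw [abelKernel, neg_div, div_mul_cancel_left₀ two_ne_zero, one_div]

lemma intervalIntegrable_abelKernel {a c : ℝ} (hac : a ≤ c) :
    IntervalIntegrable (abelKernel c) volume a c := by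
  refine intervalIntegrable_deriv_of_nonneg (g := fun x ↦ -√(2 * (c - x))) (by fun_prop) ?_
    fun x _ ↦ abelKernel_nonneg c x
  rw [min_eq_left hac, max_eq_right hac]
  exact fun x hx ↦ (hasDerivAt_sqrt_two_mul_sub hx.2).fun_neg.congr_deriv (neg_neg _)

lemma intervalIntegrable_abelKernel_of_mem_Icc {a b c : ℝ} (hc : c ∈ Set.Icc a b) :
    IntervalIntegrable (abelKernel c) volume a b := by
  refine (intervalIntegrable_abelKernel hc.1).trans
    ((_root_.intervalIntegrable_const (c := 0)).congr fun x hx ↦ ?_)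
  rw [Set.uIoc_of_le hc.2] at hx
  exact (abelKernel_of_le hx.1.le).symm

lemma intervalIntegral_eq_of_forall_mem_Ioc_eq_zero {E : Type*} [NormedAddCommGroup E]
    [NormedSpace ℝ E] {f : ℝ → E} {a b c : ℝ} (hc : c ∈ Set.Icc a b)
    (hf : ∀ x ∈ Set.Ioc c b, f x = 0) : ∫ x in a..b, f x = ∫ x in a..c, f x := by
  rw [integral_of_le (hc.1.trans hc.2), integral_of_le hc.1]
  refine setIntegral_eq_of_subset_of_forall_sdiff_eq_zero measurableSet_Ioc
    (Set.Ioc_subset_Ioc_right hc.2) fun x hx ↦ hf x ⟨?_, hx.1.2⟩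
  exact not_le.1 fun hxc ↦ hx.2 ⟨hx.1.1, hxc⟩

lemma integral_abelKernel {a c : ℝ} (hac : a ≤ c) :
    ∫ x in a..c, abelKernel c x = √(2 * (c - a)) := by
  rw [integral_eq_sub_of_hasDerivAt_of_le hac (f := fun x ↦ -√(2 * (c - x))) (by fun_prop)
    (fun x hx ↦ (hasDerivAt_sqrt_two_mul_sub hx.2).fun_neg.congr_deriv (neg_neg _))
    (intervalIntegrable_abelKernel hac)]
  simp only [sub_self, mul_zero, sqrt_zero, neg_zero, zero_sub, neg_neg]

lemma integral_sub_pow_succ_mul_abelKernel {a c : ℝ} (hac : a ≤ c) (k : ℕ) :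
    (2 * (k : ℝ) + 3) * ∫ x in a..c, (x - a) ^ (k + 1) * abelKernel c x =
      2 * ((k : ℝ) + 1) * (c - a) * ∫ x in a..c, (x - a) ^ k * abelKernel c x := by
  have integrable (j : ℕ) :
      IntervalIntegrable (fun x ↦ (x - a) ^ j * abelKernel c x) volume a c :=
    (intervalIntegrable_abelKernel hac).continuousOn_mul (by fun_prop)
  have deriv (x : ℝ) (hx : x < c) :
      HasDerivAt (fun x ↦ (x - a) ^ (k + 1) * √(2 * (c - x)))
        (2 * ((k : ℝ) + 1) * (c - a) * ((x - a) ^ k * abelKernel c x) -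
          (2 * (k : ℝ) + 3) * ((x - a) ^ (k + 1) * abelKernel c x)) x := by
    have pow : HasDerivAt (fun x ↦ (x - a) ^ (k + 1)) (((k : ℝ) + 1) * (x - a) ^ k) x :=
      (((hasDerivAt_id x).sub_const a).fun_pow (k + 1)).congr_deriv (by simp)
    refine (pow.mul (hasDerivAt_sqrt_two_mul_sub hx)).congr_deriv ?_
    rw [← mul_abelKernel]
    ring
  have ftc := integral_eq_sub_of_hasDerivAt_of_le hac (by fun_prop) (fun x hx ↦ deriv x hx.2)
    (((integrable k).const_mul _).sub ((integrable (k + 1)).const_mul _))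
  rw [intervalIntegral.integral_sub ((integrable k).const_mul _) ((integrable (k + 1)).const_mul _),
    intervalIntegral.integral_const_mul, intervalIntegral.integral_const_mul] at ftc
  simp only [sub_self, mul_zero, sqrt_zero, ne_eq, k.succ_ne_zero, not_false_eq_true, zero_pow,
    zero_mul] at ftc
  linarith

/-- Half of the Euler beta value `B(k + 1, 1/2)`, that is, the `k`-th moment of `1 / (2 √(1 - t))`
on `[0, 1]`. -/
noncomputable def abelCoeff (k : ℕ) : ℝ :=
  ∏ j ∈ Finset.range k, 2 * ((j : ℝ) + 1) / (2 * j + 3)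

lemma abelCoeff_succ (k : ℕ) :
    (2 * (k : ℝ) + 3) * abelCoeff (k + 1) = 2 * ((k : ℝ) + 1) * abelCoeff k := by
  rw [abelCoeff, Finset.prod_range_succ, ← abelCoeff]
  field_simp

lemma integral_sub_pow_mul_abelKernel {a c : ℝ} (hac : a ≤ c) (k : ℕ) :
    ∫ x in a..c, (x - a) ^ k * abelKernel c x =
      abelCoeff k * (c - a) ^ k * √(2 * (c - a)) := by
  induction k with
  | zero =>
    simp only [pow_zero, one_mul, integral_abelKernel hac, abelCoeff, Finset.range_zero,
      Finset.prod_empty]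
  | succ k ih =>
    have ne_zero : 2 * (k : ℝ) + 3 ≠ 0 := by positivity
    apply mul_left_cancel₀ ne_zero
    rw [integral_sub_pow_succ_mul_abelKernel hac, ih, pow_succ]
    linear_combination -((c - a) ^ k * (c - a) * √(2 * (c - a))) * abelCoeff_succ k

lemma integral_add_one_pow_mul_abelKernel_cos {β : ℝ} (hβ : β ∈ Set.Icc 0 π) (k : ℕ) :
    ∫ x in (-1 : ℝ)..1, (x + 1) ^ k * abelKernel (cos β) x =
      2 ^ (k + 1) * abelCoeff k * cos (β / 2) ^ (2 * k + 1) := by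
  have half_angle : cos β - -1 = 2 * cos (β / 2) ^ 2 := by
    rw [cos_sq, mul_div_cancel₀ _ two_ne_zero]
    ring
  have cos_half_nonneg : 0 ≤ cos (β / 2) :=
    cos_nonneg_of_neg_pi_div_two_le_of_le (by linarith [hβ.1, pi_pos]) (by linarith [hβ.2])
  have sqrt_eq : √(2 * (2 * cos (β / 2) ^ 2)) = 2 * cos (β / 2) := by
    rw [show 2 * (2 * cos (β / 2) ^ 2) = (2 * cos (β / 2)) ^ 2 by ring, sqrt_sq (by positivity)]
  rw [intervalIntegral_eq_of_forall_mem_Ioc_eq_zero ⟨neg_one_le_cos β, cos_le_one β⟩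
    fun x hx ↦ by rw [abelKernel_of_le hx.1.le, mul_zero]]
  have moment := integral_sub_pow_mul_abelKernel (neg_one_le_cos β) k
  simp only [half_angle, sqrt_eq, sub_neg_eq_add] at moment
  rw [moment]
  ring

end AbelKernel

section MehlerDirichlet

lemma lt_cos_of_mem_Ioo_arccos {x β : ℝ} (hx : x ∈ Set.Icc (-1) 1)
    (hβ : β ∈ Set.Ioo 0 (arccos x)) : x < cos β := by
  rw [← cos_arccos hx.1 hx.2]
  exact cos_lt_cos_of_nonneg_of_le_pi hβ.1.le (arccos_le_pi x) hβ.2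

lemma cos_le_of_mem_Ioc_arccos {x β : ℝ} (hx : x ∈ Set.Icc (-1) 1)
    (hβ : β ∈ Set.Ioc (arccos x) π) : cos β ≤ x := by
  rw [← cos_arccos hx.1 hx.2]
  exact cos_le_cos_of_nonneg_of_le_pi (arccos_nonneg x) hβ.2 hβ.1.le

lemma legendreP_eq_integral_arccos (ν : ℂ) {x : ℝ} (hx : x ≠ 1) :
    legendreP ν x = (2 / π : ℝ) * ∫ β in (0 : ℝ)..arccos x,
      Complex.cos ((2 * ν + 1) * β / 2) * abelKernel (cos β) x := by
  simp only [legendreP, if_neg hx, abelKernel, Complex.ofReal_div, Complex.ofReal_one, mul_one_div]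

lemma legendreP_eq_integral_pi (ν : ℂ) {x : ℝ} (hx : x ∈ Set.Ico (-1) 1) :
    legendreP ν x = (2 / π : ℝ) * ∫ β in (0 : ℝ)..π,
      Complex.cos ((2 * ν + 1) * β / 2) * abelKernel (cos β) x := by
  rw [legendreP_eq_integral_arccos ν hx.2.ne, intervalIntegral_eq_of_forall_mem_Ioc_eq_zero
    (b := π) ⟨arccos_nonneg x, arccos_le_pi x⟩ fun β hβ ↦ ?_]
  rw [abelKernel_of_le (cos_le_of_mem_Ioc_arccos ⟨hx.1, hx.2.le⟩ hβ), Complex.ofReal_zero, mul_zero]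

lemma two_mul_cos_sub_cos (α β : ℝ) :
    2 * (cos β - cos α) = 4 * (sin (α / 2) ^ 2 - sin (β / 2) ^ 2) := by
  rw [sin_sq_eq_half_sub, sin_sq_eq_half_sub, mul_div_cancel₀ _ two_ne_zero,
    mul_div_cancel₀ _ two_ne_zero]
  ring

lemma hasDerivAt_arcsin_sin_half_div {α β : ℝ} (hα : α ≤ π) (hβ : β ∈ Set.Ioo 0 α) :
    HasDerivAt (fun β ↦ arcsin (sin (β / 2) / sin (α / 2)))
      (cos (β / 2) * abelKernel (cos β) (cos α)) β := by
  have sin_β_pos : 0 < sin (β / 2) :=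
    sin_pos_of_pos_of_lt_pi (by linarith [hβ.1]) (by linarith [hβ.2, pi_pos])
  have sin_lt : sin (β / 2) < sin (α / 2) :=
    sin_lt_sin_of_lt_of_le_pi_div_two (by linarith [hβ.1, pi_pos]) (by linarith)
      (by linarith [hβ.2])
  have sin_α_pos : 0 < sin (α / 2) := sin_β_pos.trans sin_lt
  have ratio_pos : 0 < sin (β / 2) / sin (α / 2) := div_pos sin_β_pos sin_α_pos
  have ratio_lt_one : sin (β / 2) / sin (α / 2) < 1 := (div_lt_one sin_α_pos).2 sin_lt
  have ratio : HasDerivAt (fun β ↦ sin (β / 2) / sin (α / 2))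
      (cos (β / 2) * (1 / 2) / sin (α / 2)) β :=
    ((hasDerivAt_id β).div_const 2).sin.div_const _
  refine ((hasDerivAt_arcsin (by linarith) ratio_lt_one.ne).comp β ratio).congr_deriv ?_
  have factor : 2 * (cos β - cos α) =
      (2 * sin (α / 2)) ^ 2 * (1 - (sin (β / 2) / sin (α / 2)) ^ 2) := by
    rw [two_mul_cos_sub_cos]
    field_simp
    ring
  rw [abelKernel, factor, sqrt_mul (sq_nonneg _), sqrt_sq (by positivity)]
  field_simp

lemma continuous_arcsin_sin_half_div (α : ℝ) :
    Continuous fun β ↦ arcsin (sin (β / 2) / sin (α / 2)) :=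
  continuous_arcsin.comp (by fun_prop)

lemma intervalIntegrable_cos_half_mul_abelKernel {α : ℝ} (hα : α ∈ Set.Icc 0 π) :
    IntervalIntegrable (fun β ↦ cos (β / 2) * abelKernel (cos β) (cos α)) volume 0 α := by
  refine intervalIntegrable_deriv_of_nonneg (continuous_arcsin_sin_half_div α).continuousOn ?_ ?_
  all_goals rw [min_eq_left hα.1, max_eq_right hα.1]
  · exact fun β hβ ↦ hasDerivAt_arcsin_sin_half_div hα.2 hβ
  · refine fun β hβ ↦ mul_nonneg (cos_nonneg_of_neg_pi_div_two_le_of_le ?_ ?_)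
      (abelKernel_nonneg _ _)
    · linarith [hβ.1, pi_pos]
    · linarith [hβ.2, hα.2]

lemma integral_cos_half_mul_abelKernel {α : ℝ} (hα : α ∈ Set.Ioc 0 π) :
    ∫ β in (0 : ℝ)..α, cos (β / 2) * abelKernel (cos β) (cos α) = π / 2 := by
  have sin_pos : 0 < sin (α / 2) :=
    sin_pos_of_pos_of_lt_pi (by linarith [hα.1]) (by linarith [hα.2, pi_pos])
  rw [integral_eq_sub_of_hasDerivAt_of_le hα.1.le (continuous_arcsin_sin_half_div α).continuousOn
    (fun β hβ ↦ hasDerivAt_arcsin_sin_half_div hα.2 hβ)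
    (intervalIntegrable_cos_half_mul_abelKernel ⟨hα.1.le, hα.2⟩), div_self sin_pos.ne', zero_div,
    sin_zero, zero_div, arcsin_one, arcsin_zero, sub_zero]

lemma intervalIntegrable_mul_abelKernel_cos {α : ℝ} (hα : α ∈ Set.Ico 0 π) {g : ℝ → ℂ}
    (hg : Continuous g) :
    IntervalIntegrable (fun β ↦ g β * abelKernel (cos β) (cos α)) volume 0 α := by
  have cos_half_ne_zero (β : ℝ) (hβ : β ∈ Set.uIcc 0 α) : ((cos (β / 2) : ℝ) : ℂ) ≠ 0 := by
    rw [Set.uIcc_of_le hα.1] at hβ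
    have cos_half_pos : 0 < cos (β / 2) :=
      cos_pos_of_mem_Ioo ⟨by linarith [hβ.1, pi_pos], by linarith [hβ.2, hα.2]⟩
    exact mod_cast cos_half_pos.ne'
  have real := intervalIntegrable_cos_half_mul_abelKernel ⟨hα.1, hα.2.le⟩
  have base : IntervalIntegrable
      (fun β ↦ ((cos (β / 2) * abelKernel (cos β) (cos α) : ℝ) : ℂ)) volume 0 α :=
    ⟨real.1.ofReal, real.2.ofReal⟩
  refine (base.continuousOn_mul (g := fun β ↦ g β / (cos (β / 2) : ℝ))
    (hg.continuousOn.div (by fun_prop) cos_half_ne_zero)).congr fun β hβ ↦ ?_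
  have ne_zero := cos_half_ne_zero β (Set.uIoc_subset_uIcc hβ)
  rw [Complex.ofReal_mul]
  field_simp

lemma intervalIntegrable_legendreP_integrand (ν : ℂ) {x : ℝ} (hx : x ∈ Set.Ioo (-1) 1) :
    IntervalIntegrable (fun β : ℝ ↦ Complex.cos ((2 * ν + 1) * β / 2) * abelKernel (cos β) x)
      volume 0 (arccos x) := by
  have integrable := intervalIntegrable_mul_abelKernel_cos
    (g := fun β ↦ Complex.cos ((2 * ν + 1) * β / 2))
    ⟨arccos_nonneg x, arccos_lt_pi.2 hx.1⟩ (by fun_prop)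
  rwa [cos_arccos hx.1.le hx.2.le] at integrable

lemma legendreP_zero {x : ℝ} (hx : x ∈ Set.Ioo (-1) 1) : legendreP 0 x = 1 := by
  have integral := integral_cos_half_mul_abelKernel ⟨arccos_pos.2 hx.2, arccos_le_pi x⟩
  rw [cos_arccos hx.1.le hx.2.le] at integral
  rw [legendreP_eq_integral_arccos 0 hx.2.ne]
  calc ((2 / π : ℝ) : ℂ) * ∫ β in (0 : ℝ)..arccos x,
        Complex.cos ((2 * 0 + 1) * β / 2) * abelKernel (cos β) x
      = (2 / π : ℝ) * ((∫ β in (0 : ℝ)..arccos x, cos (β / 2) * abelKernel (cos β) x : ℝ) : ℂ) := by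
        simp only [← intervalIntegral.integral_ofReal, mul_zero, zero_add, one_mul,
          Complex.ofReal_mul, Complex.ofReal_cos, Complex.ofReal_div, Complex.ofReal_ofNat]
    _ = 1 := by
        rw [integral, ← Complex.ofReal_mul, div_mul_div_cancel₀ pi_ne_zero, div_self two_ne_zero,
          Complex.ofReal_one]

-- The square root vanishes at `β = arccos x` and the sine at `β = 0`, so the Mehler–Dirichlet
-- integrals of the degrees `ν + 1`, `ν`, `ν - 1` satisfy a linear relation.
lemma hasDerivAt_sin_mul_sqrt (ν : ℂ) {x β : ℝ} (h : x < cos β) :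
    HasDerivAt (fun β : ℝ ↦ Complex.sin ((2 * ν + 1) * β / 2) * √(2 * (cos β - x)))
      ((ν + 1) * (Complex.cos ((2 * (ν + 1) + 1) * β / 2) * abelKernel (cos β) x) -
        (2 * ν + 1) * x * (Complex.cos ((2 * ν + 1) * β / 2) * abelKernel (cos β) x) +
        ν * (Complex.cos ((2 * (ν - 1) + 1) * β / 2) * abelKernel (cos β) x)) β := by
  have sqrt : HasDerivAt (fun β ↦ √(2 * (cos β - x))) (-sin β * abelKernel (cos β) x) β := by
    have inner : HasDerivAt (fun β ↦ 2 * (cos β - x)) (2 * -sin β) β :=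
      ((hasDerivAt_cos β).sub_const x).const_mul 2
    refine (inner.sqrt (by linarith)).congr_deriv ?_
    rw [abelKernel, mul_div_mul_left _ _ two_ne_zero, mul_one_div]
  have sine : HasDerivAt (fun β : ℝ ↦ Complex.sin ((2 * ν + 1) * β / 2))
      (Complex.cos ((2 * ν + 1) * β / 2) * ((2 * ν + 1) / 2)) β := by
    have inner : HasDerivAt (fun z : ℂ ↦ (2 * ν + 1) * z / 2) ((2 * ν + 1) / 2) β :=
      (((hasDerivAt_id (β : ℂ)).const_mul (2 * ν + 1)).div_const 2).congr_deriv (by rw [mul_one])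
    exact inner.csin.comp_ofReal
  refine (sine.mul sqrt.ofReal_comp).congr_deriv ?_
  rw [← mul_abelKernel, show (2 * (ν + 1) + 1) * (β : ℂ) / 2 = (2 * ν + 1) * β / 2 + β by ring,
    show (2 * (ν - 1) + 1) * (β : ℂ) / 2 = (2 * ν + 1) * β / 2 - β by ring, Complex.cos_add,
    Complex.cos_sub]
  push_cast
  ring

lemma legendreP_bonnet (ν : ℂ) {x : ℝ} (hx : x ∈ Set.Ioo (-1) 1) :
    (ν + 1) * legendreP (ν + 1) x =
      (2 * ν + 1) * x * legendreP ν x - ν * legendreP (ν - 1) x := by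
  have integrable (ν c : ℂ) := (intervalIntegrable_legendreP_integrand ν hx).const_mul c
  have ftc := integral_eq_sub_of_hasDerivAt_of_le (arccos_nonneg x)
    (Continuous.continuousOn (by fun_prop))
    (fun β hβ ↦ hasDerivAt_sin_mul_sqrt ν
      (lt_cos_of_mem_Ioo_arccos (Set.Ioo_subset_Icc_self hx) hβ))
    (((integrable (ν + 1) (ν + 1)).sub (integrable ν ((2 * ν + 1) * x))).add
      (integrable (ν - 1) ν))
  rw [intervalIntegral.integral_add ((integrable _ _).sub (integrable _ _)) (integrable _ _),
    intervalIntegral.integral_sub (integrable _ _) (integrable _ _),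
    intervalIntegral.integral_const_mul, intervalIntegral.integral_const_mul,
    intervalIntegral.integral_const_mul, cos_arccos hx.1.le hx.2.le] at ftc
  simp only [sub_self, mul_zero, sqrt_zero, Complex.ofReal_zero, zero_div, Complex.sin_zero,
    zero_mul] at ftc
  simp only [legendreP_eq_integral_arccos _ hx.2.ne]
  linear_combination ((2 / π : ℝ) : ℂ) * ftc

lemma legendreP_natCast (n : ℕ) {x : ℝ} (hx : x ∈ Set.Ioo (-1) 1) :
    legendreP n x = (legendrePoly ℂ n).eval (x : ℂ) := by
  induction n using Nat.twoStepInduction with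
  | zero => rw [Nat.cast_zero, legendreP_zero hx, legendrePoly, Polynomial.eval_one]
  | one =>
    have bonnet := legendreP_bonnet 0 hx
    rw [legendreP_zero hx] at bonnet
    simpa [legendrePoly] using bonnet
  | more n ih ih' =>
    have bonnet := legendreP_bonnet (n + 1 : ℕ) hx
    rw [show (((n + 1 : ℕ) : ℂ) + 1) = (n + 2 : ℕ) by push_cast; ring,
      show (((n + 1 : ℕ) : ℂ) - 1) = n by push_cast; ring, ih, ih'] at bonnet
    have ne_zero : (n : ℂ) + 2 ≠ 0 := mod_cast (n + 1).succ_ne_zero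
    apply mul_left_cancel₀ ne_zero
    rw [eval_legendrePoly_bonnet]
    push_cast at bonnet ⊢
    linear_combination bonnet

end MehlerDirichlet

section Fubini

lemma integrable_abelKernel_cos :
    Integrable (fun z : ℝ × ℝ ↦ abelKernel (cos z.2) z.1)
      ((volume.restrict (Set.Ioc (-1) 1)).prod (volume.restrict (Set.Ioc 0 π))) := by
  have measurable : Measurable fun z : ℝ × ℝ ↦ abelKernel (cos z.2) z.1 :=
    measurable_abelKernel.comp (by fun_prop : Measurable fun z : ℝ × ℝ ↦ (cos z.2, z.1))
  have norm_integral (β : ℝ) :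
      ∫ x in Set.Ioc (-1) 1, ‖abelKernel (cos β) x‖ = √(2 * (cos β - -1)) := by
    simp only [norm_of_nonneg (abelKernel_nonneg _ _)]
    rw [← integral_of_le (by norm_num), intervalIntegral_eq_of_forall_mem_Ioc_eq_zero
      ⟨neg_one_le_cos β, cos_le_one β⟩ fun x hx ↦ abelKernel_of_le hx.1.le,
      integral_abelKernel (neg_one_le_cos β)]
  rw [integrable_prod_iff' measurable.aestronglyMeasurable]
  refine ⟨.of_forall fun β ↦ ?_, ?_⟩
  · exact (intervalIntegrable_abelKernel_of_mem_Icc ⟨neg_one_le_cos β, cos_le_one β⟩).1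
  · simp only [norm_integral]
    exact (Continuous.intervalIntegrable (by fun_prop) 0 π).1

lemma integrable_mul_abelKernel_cos {g : ℝ × ℝ → ℂ} (hg : Continuous g) :
    Integrable (fun z : ℝ × ℝ ↦ g z * abelKernel (cos z.2) z.1)
      ((volume.restrict (Set.Ioc (-1) 1)).prod (volume.restrict (Set.Ioc 0 π))) := by
  obtain ⟨C, hC⟩ := ((isCompact_Icc (a := (-1 : ℝ)) (b := 1)).prod
    (isCompact_Icc (a := 0) (b := π))).exists_bound_of_continuousOn hg.continuousOn
  refine integrable_abelKernel_cos.ofReal.bdd_mul (c := C) hg.aestronglyMeasurable ?_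
  rw [Measure.prod_restrict]
  filter_upwards [ae_restrict_mem (measurableSet_Ioc.prod measurableSet_Ioc)] with z hz
  exact hC z (Set.prod_mono Set.Ioc_subset_Icc_self Set.Ioc_subset_Icc_self hz)

variable (μ : ℂ)

lemma legendreP_mul_ae_eq (f : ℝ → ℂ) :
    (fun x ↦ legendreP μ x * f x) =ᵐ[volume.restrict (Set.Ioc (-1) 1)] fun x ↦
      (2 / π : ℝ) * ∫ β in Set.Ioc 0 π,
        Complex.cos ((2 * μ + 1) * β / 2) * f x * abelKernel (cos β) x := by
  have ne_one : ∀ᵐ x ∂volume.restrict (Set.Ioc (-1 : ℝ) 1), x ≠ 1 :=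
    ae_restrict_of_ae (Measure.ae_ne volume 1)
  filter_upwards [ae_restrict_mem measurableSet_Ioc, ne_one] with x hx hx_ne
  rw [legendreP_eq_integral_pi μ ⟨hx.1.le, lt_of_le_of_ne hx.2 hx_ne⟩,
    integral_of_le pi_pos.le, mul_assoc, ← MeasureTheory.integral_mul_const]
  simp only [mul_right_comm]

variable {f : ℝ → ℂ}

lemma intervalIntegrable_legendreP_mul (hf : Continuous f) :
    IntervalIntegrable (fun x ↦ legendreP μ x * f x) volume (-1) 1 := by
  rw [intervalIntegrable_iff_integrableOn_Ioc_of_le (by norm_num)]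
  exact ((integrable_mul_abelKernel_cos
    (g := fun z ↦ Complex.cos ((2 * μ + 1) * z.2 / 2) * f z.1)
    (by fun_prop)).integral_prod_left.const_mul _).congr (legendreP_mul_ae_eq μ f).symm

lemma integral_legendreP_mul (hf : Continuous f) :
    ∫ x in (-1 : ℝ)..1, legendreP μ x * f x =
      (2 / π : ℝ) * ∫ β in (0 : ℝ)..π, Complex.cos ((2 * μ + 1) * β / 2) *
        ∫ x in (-1 : ℝ)..1, f x * abelKernel (cos β) x := by
  have integrable := integrable_mul_abelKernel_cos
    (g := fun z ↦ Complex.cos ((2 * μ + 1) * z.2 / 2) * f z.1) (by fun_prop)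
  rw [integral_of_le (by norm_num), MeasureTheory.integral_congr_ae (legendreP_mul_ae_eq μ f),
    MeasureTheory.integral_const_mul, MeasureTheory.integral_integral_swap integrable,
    integral_of_le pi_pos.le]
  simp only [integral_of_le (show (-1 : ℝ) ≤ 1 by norm_num), mul_assoc,
    MeasureTheory.integral_const_mul]

end Fubini

section LegendreFunctional

lemma integral_cos_mul_cos_pow_add_two (a : ℂ) (n : ℕ) :
    (((n : ℂ) + 2) ^ 2 - a ^ 2) *
        ∫ θ in (0 : ℝ)..π / 2, Complex.cos (a * θ) * Complex.cos θ ^ (n + 2) =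
      ((n : ℂ) + 2) * (n + 1) *
        ∫ θ in (0 : ℝ)..π / 2, Complex.cos (a * θ) * Complex.cos θ ^ n := by
  have ne_zero : (n : ℂ) + 2 ≠ 0 := mod_cast (n + 1).succ_ne_zero
  rcases eq_or_ne a 0 with rfl | ha
  · have reduction := congrArg ((↑) : ℝ → ℂ) (integral_cos_pow (a := 0) (b := π / 2) (n := n))
    simp only [cos_pi_div_two, sin_zero, ne_eq, n.succ_ne_zero, not_false_eq_true, zero_pow,
      zero_mul, mul_zero, sub_zero, zero_div, zero_add, Complex.ofReal_mul, Complex.ofReal_div,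
      Complex.ofReal_add, Complex.ofReal_natCast, Complex.ofReal_one, Complex.ofReal_ofNat,
      ← intervalIntegral.integral_ofReal, Complex.ofReal_pow, Complex.ofReal_cos] at reduction
    simp only [zero_mul, Complex.cos_zero, one_mul, reduction]
    field_simp
    ring
  · have reduction := EulerSine.integral_cos_mul_cos_pow (n := n + 2) (z := a / 2) (by lia)
      (div_ne_zero ha two_ne_zero)
    rw [mul_div_cancel₀ a two_ne_zero, Nat.add_sub_cancel] at reduction
    push_cast at reduction
    field_simp at reduction
    linear_combination reduction / 4

/-- Integration of a polynomial over `[-1, 1]` against the Legendre function `P_μ`. -/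
noncomputable def legendreFunctional (μ : ℂ) : Polynomial ℂ →ₗ[ℂ] ℂ where
  toFun p := ∫ x in (-1 : ℝ)..1, legendreP μ x * p.eval (x : ℂ)
  map_add' p q := by
    simp only [Polynomial.eval_add, mul_add]
    exact intervalIntegral.integral_add (intervalIntegrable_legendreP_mul μ (by fun_prop))
      (intervalIntegrable_legendreP_mul μ (by fun_prop))
  map_smul' a p := by
    simp only [Polynomial.eval_smul, smul_eq_mul, mul_left_comm _ a,
      intervalIntegral.integral_const_mul, RingHom.id_apply]

lemma legendreFunctional_apply (μ : ℂ) (p : Polynomial ℂ) :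
    legendreFunctional μ p = ∫ x in (-1 : ℝ)..1, legendreP μ x * p.eval (x : ℂ) := rfl

open Polynomial in
lemma legendreFunctional_X_add_one_pow (μ : ℂ) (k : ℕ) :
    legendreFunctional μ ((X + 1) ^ k) = 2 ^ (k + 3) / π * abelCoeff k *
      ∫ θ in (0 : ℝ)..π / 2, Complex.cos ((2 * μ + 1) * θ) * Complex.cos θ ^ (2 * k + 1) := by
  have inner (β : ℝ) (hβ : β ∈ Set.uIcc 0 π) :
      Complex.cos ((2 * μ + 1) * β / 2) *
          ∫ x in (-1 : ℝ)..1, eval (x : ℂ) ((X + 1) ^ k) * abelKernel (cos β) x =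
        2 ^ (k + 1) * abelCoeff k * (Complex.cos ((2 * μ + 1) * (β / 2 : ℝ)) *
          Complex.cos (β / 2 : ℝ) ^ (2 * k + 1)) := by
    rw [Set.uIcc_of_le pi_pos.le] at hβ
    have moment := congrArg ((↑) : ℝ → ℂ) (integral_add_one_pow_mul_abelKernel_cos hβ k)
    rw [← intervalIntegral.integral_ofReal] at moment
    simp only [eval_pow, eval_add, eval_X, eval_one]
    push_cast at moment ⊢
    rw [moment]
    ring_nf
  rw [legendreFunctional_apply, integral_legendreP_mul μ (by fun_prop), integral_congr inner,
    intervalIntegral.integral_const_mul, integral_comp_div (fun θ : ℝ ↦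
      Complex.cos ((2 * μ + 1) * θ) * Complex.cos θ ^ (2 * k + 1)) two_ne_zero, zero_div,
    Complex.real_smul]
  push_cast
  ring

open Polynomial in
lemma legendreFunctional_X_add_one_pow_succ (μ : ℂ) (k : ℕ) :
    2 * ((k : ℂ) + 1) ^ 2 * legendreFunctional μ ((X + 1) ^ k) =
      (((k : ℂ) + 1) * (k + 2) - μ * (μ + 1)) * legendreFunctional μ ((X + 1) ^ (k + 1)) := by
  have reduction := integral_cos_mul_cos_pow_add_two (2 * μ + 1) (2 * k + 1)
  have coeff : (2 * (k : ℂ) + 3) * abelCoeff (k + 1) = 2 * ((k : ℂ) + 1) * abelCoeff k :=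
    mod_cast abelCoeff_succ k
  have ne_zero : 2 * (k : ℂ) + 3 ≠ 0 := mod_cast (2 * k + 2).succ_ne_zero
  apply mul_left_cancel₀ ne_zero
  rw [legendreFunctional_X_add_one_pow, legendreFunctional_X_add_one_pow,
    show 2 * (k + 1) + 1 = 2 * k + 1 + 2 by ring]
  push_cast at reduction
  set I := ∫ θ in (0 : ℝ)..π / 2, Complex.cos ((2 * μ + 1) * θ) * Complex.cos θ ^ (2 * k + 1)
  linear_combination -(2 ^ (k + 4) / π * (2 * (k : ℂ) + 3) * abelCoeff (k + 1) / 4) * reduction -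
    2 ^ (k + 3) / π * (2 * (k : ℂ) + 3) * (k + 1) * I * coeff

lemma legendreFunctional_one {μ : ℂ} (hμ : μ ≠ 0) (hμ' : μ + 1 ≠ 0) :
    legendreFunctional μ 1 = 2 * Complex.sin (π * μ) / (π * μ * (μ + 1)) := by
  have product_to_sum (θ : ℝ) : Complex.cos ((2 * μ + 1) * θ) * Complex.cos θ =
      (Complex.cos (2 * (μ + 1) * θ) + Complex.cos (2 * μ * θ)) / 2 := by
    rw [show 2 * (μ + 1) * (θ : ℂ) = (2 * μ + 1) * θ + θ by ring,
      show 2 * μ * (θ : ℂ) = (2 * μ + 1) * θ - θ by ring, Complex.cos_add, Complex.cos_sub]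
    ring
  have integrable (a : ℂ) :
      IntervalIntegrable (fun θ : ℝ ↦ Complex.cos (a * θ)) volume 0 (π / 2) :=
    Continuous.intervalIntegrable (by fun_prop) _ _
  have sin_add : Complex.sin (2 * (μ + 1) * (π / 2)) = -Complex.sin (π * μ) := by
    rw [show 2 * (μ + 1) * (π / 2 : ℂ) = π * μ + π by ring, Complex.sin_add_pi]
  have moment := legendreFunctional_X_add_one_pow μ 0
  simp only [pow_zero, mul_zero, zero_add, pow_one, abelCoeff, Finset.range_zero,
    Finset.prod_empty, product_to_sum, intervalIntegral.integral_div] at moment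
  rw [moment, intervalIntegral.integral_add (integrable _) (integrable _),
    integral_cos_mul_complex (mul_ne_zero two_ne_zero hμ'),
    integral_cos_mul_complex (mul_ne_zero two_ne_zero hμ)]
  push_cast
  rw [sin_add, show 2 * μ * (π / 2 : ℂ) = π * μ by ring, mul_zero, mul_zero, Complex.sin_zero]
  have pi_ne_zero : (π : ℂ) ≠ 0 := mod_cast Real.pi_ne_zero
  field_simp
  ring

lemma legendreFunctional_legendreOperator (μ : ℂ) {p : Polynomial ℂ} (hp : p.IsRoot (-1)) :
    legendreFunctional μ (legendreOperator ℂ p) = -(μ * (μ + 1)) * legendreFunctional μ p :=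
  map_legendreOperator_of_moments _ _ (legendreFunctional_X_add_one_pow_succ μ) hp

lemma legendreFunctional_legendrePoly_sq_succ (μ : ℂ) (n : ℕ) :
    ((2 * (n : ℂ) + 2) * (2 * n + 3) - μ * (μ + 1)) *
        legendreFunctional μ (legendrePoly ℂ (n + 1) ^ 2) =
      ((2 * (n : ℂ) + 1) * (2 * n + 2) - μ * (μ + 1)) *
        legendreFunctional μ (legendrePoly ℂ n ^ 2) := by
  have root : (legendrePoly ℂ (n + 1) ^ 2 - legendrePoly ℂ n ^ 2).IsRoot (-1) := by
    rw [Polynomial.IsRoot, Polynomial.eval_sub, Polynomial.eval_pow, Polynomial.eval_pow,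
      eval_neg_one_legendrePoly, eval_neg_one_legendrePoly]
    ring
  have adjoint := legendreFunctional_legendreOperator μ root
  rw [legendreOperator_sq_sub_sq, map_sub, map_sub, map_smul, map_smul, smul_eq_mul,
    smul_eq_mul] at adjoint
  linear_combination -adjoint

lemma T_natCast (μ : ℂ) (n : ℕ) :
    T μ n = (-1) ^ n * legendreFunctional μ (legendrePoly ℂ n ^ 2) := by
  rw [T, legendreFunctional_apply, ← intervalIntegral.integral_const_mul]
  refine integral_congr_Ioo_of_le (by norm_num) fun x hx ↦ ?_
  have neg_mem : -x ∈ Set.Ioo (-1) 1 := ⟨by linarith [hx.2], by linarith [hx.1]⟩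
  simp only [legendreP_natCast n hx, legendreP_natCast n neg_mem, Complex.ofReal_neg,
    eval_neg_legendrePoly, Polynomial.eval_pow]
  ring

end LegendreFunctional

section Gamma

/-- The quotient `Γ(s) / Γ(s + 1/2)`, in which the recursion for the integrals of `P_μ P_n²` over
`[-1, 1]` is solved. -/
noncomputable def gammaHalfRatio (s : ℂ) : ℂ :=
  Complex.Gamma s / Complex.Gamma (s + 1 / 2)

lemma gammaHalfRatio_add_one {s : ℂ} (hs : s ≠ 0) :
    (s + 1 / 2) * gammaHalfRatio (s + 1) = s * gammaHalfRatio s := by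
  rw [gammaHalfRatio, gammaHalfRatio, Complex.Gamma_add_one s hs, add_right_comm,
    div_eq_mul_inv (Complex.Gamma s),
    Complex.one_div_Gamma_eq_self_mul_one_div_Gamma_add_one (s + 1 / 2)]
  ring

lemma eq_mul_gammaHalfRatio_of_recursion {a : ℕ → ℂ} {s t c : ℂ}
    (hs : ∀ n : ℕ, s + n ≠ 0) (hs' : ∀ n : ℕ, s + n + 1 / 2 ≠ 0)
    (ht : ∀ n : ℕ, t + n ≠ 0) (ht' : ∀ n : ℕ, t + n + 1 / 2 ≠ 0)
    (zero : a 0 = c * (gammaHalfRatio s * gammaHalfRatio t))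
    (succ : ∀ n : ℕ,
      (s + n + 1 / 2) * (t + n + 1 / 2) * a (n + 1) = (s + n) * (t + n) * a n) (n : ℕ) :
    a n = c * (gammaHalfRatio (s + n) * gammaHalfRatio (t + n)) := by
  induction n with
  | zero => rw [zero, Nat.cast_zero, add_zero, add_zero]
  | succ n ih =>
    apply mul_left_cancel₀ (mul_ne_zero (hs' n) (ht' n))
    rw [succ, ih, Nat.cast_add_one, ← add_assoc, ← add_assoc]
    linear_combination
      -c * (t + n + 1 / 2) * gammaHalfRatio (t + n + 1) * gammaHalfRatio_add_one (hs n) -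
        c * (s + n) * gammaHalfRatio (s + n) * gammaHalfRatio_add_one (ht n)

lemma Gamma_mul_Gamma_add_half_mul_Gamma_mul_Gamma_add_half {μ : ℂ} (hμ : μ ≠ 0)
    (hμ' : μ + 1 ≠ 0) :
    Complex.Gamma ((1 - μ) / 2) * Complex.Gamma ((1 - μ) / 2 + 1 / 2) *
        (Complex.Gamma ((μ + 2) / 2) * Complex.Gamma ((μ + 2) / 2 + 1 / 2)) =
      π ^ 2 * μ * (μ + 1) / (2 * Complex.sin (π * μ)) := by
  have Gamma_eq : Complex.Gamma (μ + 2) = (μ + 1) * (μ * Complex.Gamma μ) := by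
    rw [show μ + 2 = μ + 1 + 1 by ring, Complex.Gamma_add_one _ hμ', Complex.Gamma_add_one _ hμ]
  have two_pow : (2 : ℂ) ^ (1 - (1 - μ)) * 2 ^ (1 - (μ + 2)) = 1 / 2 := by
    rw [← Complex.cpow_add _ _ two_ne_zero, show 1 - (1 - μ) + (1 - (μ + 2)) = -1 by ring,
      Complex.cpow_neg_one, one_div]
  have sqrt_sq : (√π : ℂ) ^ 2 = π := mod_cast Real.sq_sqrt pi_pos.le
  rw [Complex.Gamma_mul_Gamma_add_half, Complex.Gamma_mul_Gamma_add_half,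
    mul_div_cancel₀ _ two_ne_zero, mul_div_cancel₀ _ two_ne_zero, Gamma_eq]
  calc Complex.Gamma (1 - μ) * 2 ^ (1 - (1 - μ)) * √π *
        ((μ + 1) * (μ * Complex.Gamma μ) * 2 ^ (1 - (μ + 2)) * √π)
      = μ * (μ + 1) * (Complex.Gamma μ * Complex.Gamma (1 - μ)) *
          (2 ^ (1 - (1 - μ)) * 2 ^ (1 - (μ + 2))) * (√π : ℂ) ^ 2 := by ring
    _ = π ^ 2 * μ * (μ + 1) / (2 * Complex.sin (π * μ)) := by
        rw [Complex.Gamma_mul_Gamma_one_sub, two_pow, sqrt_sq]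
        ring

lemma legendreFunctional_one_eq_gammaHalfRatio {μ : ℂ} (hμ : μ ≠ 0) (hμ' : μ + 1 ≠ 0) :
    legendreFunctional μ 1 =
      π / (Complex.Gamma ((1 - μ) / 2) * Complex.Gamma ((μ + 2) / 2)) ^ 2 *
        (gammaHalfRatio ((1 - μ) / 2) * gammaHalfRatio ((μ + 2) / 2)) := by
  have pi_ne_zero : (π : ℂ) ≠ 0 := mod_cast Real.pi_ne_zero
  calc legendreFunctional μ 1
      = π / (π ^ 2 * μ * (μ + 1) / (2 * Complex.sin (π * μ))) := by
        rw [legendreFunctional_one hμ hμ']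
        field_simp
    _ = _ := by
        rw [← Gamma_mul_Gamma_add_half_mul_Gamma_mul_Gamma_add_half hμ hμ', gammaHalfRatio,
          gammaHalfRatio]
        field_simp

lemma legendreFunctional_legendrePoly_sq {μ : ℂ} (hμ : ∀ m : ℤ, μ ≠ m) (n : ℕ) :
    legendreFunctional μ (legendrePoly ℂ n ^ 2) =
      π / (Complex.Gamma ((1 - μ) / 2) * Complex.Gamma ((μ + 2) / 2)) ^ 2 *
        (gammaHalfRatio ((1 - μ) / 2 + n) * gammaHalfRatio ((μ + 2) / 2 + n)) := by
  have sub_ne_zero (m : ℤ) : m - μ ≠ 0 := sub_ne_zero.2 (hμ m).symm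
  have add_ne_zero (m : ℤ) : μ + m ≠ 0 := fun h ↦ hμ (-m) (by
    rw [Int.cast_neg]
    exact eq_neg_of_add_eq_zero_left h)
  refine eq_mul_gammaHalfRatio_of_recursion
    (a := fun n ↦ legendreFunctional μ (legendrePoly ℂ n ^ 2))
    (fun n h ↦ sub_ne_zero (2 * n + 1) ?_) (fun n h ↦ sub_ne_zero (2 * n + 2) ?_)
    (fun n h ↦ add_ne_zero (2 * n + 2) ?_) (fun n h ↦ add_ne_zero (2 * n + 3) ?_) ?_ ?_ n
  iterate 4
    push_cast
    linear_combination 2 * h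
  · simp only [legendrePoly, one_pow]
    exact legendreFunctional_one_eq_gammaHalfRatio (mod_cast hμ 0) (mod_cast add_ne_zero 1)
  · intro n
    linear_combination legendreFunctional_legendrePoly_sq_succ μ n / 4

end Gamma

theorem stmt_5 (μ : ℂ) (hμ : ∀ m : ℤ, μ ≠ (m : ℂ)) (n : ℕ) :
    T μ (n : ℂ)
      = (-1)^n * (π:ℂ) * Complex.Gamma ((2*n+1-μ)/2) * Complex.Gamma ((2*n+2+μ)/2)
        / ((Complex.Gamma ((1-μ)/2))^2 * (Complex.Gamma ((μ+2)/2))^2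
            * Complex.Gamma ((2*n+2-μ)/2) * Complex.Gamma ((2*n+3+μ)/2)) := by
  rw [T_natCast, legendreFunctional_legendrePoly_sq hμ, gammaHalfRatio, gammaHalfRatio,
    show (1 - μ) / 2 + n + 1 / 2 = (2 * n + 2 - μ) / 2 by ring,
    show (1 - μ) / 2 + n = (2 * n + 1 - μ) / 2 by ring,
    show (μ + 2) / 2 + n + 1 / 2 = (2 * n + 3 + μ) / 2 by ring,
    show (μ + 2) / 2 + n = (2 * n + 2 + μ) / 2 by ring]
  field_simp
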